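/- Let T > 0, let p, q ∈ C¹([0,T]; ℝ), and let w : Δ^T → ℂ² be C¹, where Δ^T := {(x,t) : 0 ≤ x ≤ t ≤ T}. Suppose that for every f ∈ C¹([0,T]; ℂ) with f(0) = f′(0) = 0, the function u^f(x,t) := f(t−x)·(1,i)ᵀ + ∫_x^t f(t−s) w(x,s) ds satisfies i ∂u/∂t + J ∂u/∂x + V(x) u = 0 at every point of Δ^T. Then −i w₁(x,x) + w₂(x,x) = p(x) + i q(x) for every x ∈ [0,T]. -/

import Mathlib

/-!
The idea is to test the hypothesis with a single input, `f(t) = t²` for `t ≥ 0`, and to look at the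
scalar combination `φ = u₁ + i u₂`. Since `(1, i)` is annihilated by this combination, `φ` only
sees the integral term, and adding `i` times the second row of the Dirac equation to the first one
gives the transport equation `i (∂ₜ - ∂ₓ) φ + (p + i q) (u₁ - i u₂) = 0`.

Substituting `s = x + θ (t - x)` turns the integral term into `(t - x)³ K(x, t)` with
`K(x, t) = ∫₀¹ (1 - θ)² w(x, x + θ (t - x)) dθ`. The domain of integration being fixed, `K` is
differentiable in the interior of the triangle (`differentiableAt_avg`) and continuous up to the
diagonal (`continuousOn_avg`), where it equals `w / 3` (`avg_diag`).

Along the curve `τ ↦ (c - τ, c + τ)`, `0 < c < T`, which leaves the diagonal in the direction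
`(-1, 1)`, the function `φ` equals `8 τ³ (K₁ + i K₂)`, so `φ / τ³` tends to
`8 (w₁ + i w₂)(c, c) / 3`, while the transport equation makes `φ' / τ²` tend to
`8 i (p + i q)(c)`. L'Hôpital's rule (`lhopital_cube`) yields
`w₁ + i w₂ = i (p + i q)` at `(c, c)`, and the endpoints `c = 0, T` follow by continuity.
-/

open MeasureTheory Set

noncomputable section

/-- The matrix `J = [[0,1],[-1,0]]`. -/
def Jmat : Matrix (Fin 2) (Fin 2) ℂ := !![0, 1; -1, 0]

/-- The potential matrix `V(x) = [[p x, q x],[q x, -p x]]`. -/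
def Vmat (p q : ℝ → ℝ) (x : ℝ) : Matrix (Fin 2) (Fin 2) ℂ :=
  !![(p x : ℂ), (q x : ℂ); (q x : ℂ), -(p x : ℂ)]

/-- The domain `Δ^T = {(x,t) : 0 ≤ x ≤ t ≤ T}`. -/
def DeltaT (T : ℝ) : Set (ℝ × ℝ) := {z | 0 ≤ z.1 ∧ z.1 ≤ z.2 ∧ z.2 ≤ T}

/-- The Dirac equation `i ∂u/∂t + J ∂u/∂x + V u = 0` holding at every point of `D`,
partial derivatives being taken within `D`. -/
def DiracOn (p q : ℝ → ℝ) (D : Set (ℝ × ℝ)) (u : ℝ × ℝ → Fin 2 → ℂ) : Prop :=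
  ∀ z ∈ D,
    Complex.I • (fderivWithin ℝ u D z ((0 : ℝ), (1 : ℝ)))
      + Jmat.mulVec (fderivWithin ℝ u D z ((1 : ℝ), (0 : ℝ)))
      + (Vmat p q z.1).mulVec (u z) = 0

/-- The Duhamel-type representation
`u^f(x,t) = f(t-x)·(1,i)ᵀ + ∫_x^t f(t-s) w(x,s) ds`. -/
def usol (f : ℝ → ℂ) (w : ℝ × ℝ → Fin 2 → ℂ) (z : ℝ × ℝ) : Fin 2 → ℂ :=
  f (z.2 - z.1) • ![1, Complex.I] + ∫ s in z.1..z.2, f (z.2 - s) • w (z.1, s)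

open Filter Topology

/-! ### The triangle -/

lemma isCompact_DeltaT (T : ℝ) : IsCompact (DeltaT T) := by
  refine (isCompact_Icc (a := ((0 : ℝ), (0 : ℝ))) (b := (T, T))).of_isClosed_subset ?_ ?_
  · exact (isClosed_le continuous_const continuous_fst).inter
      ((isClosed_le continuous_fst continuous_snd).inter
        (isClosed_le continuous_snd continuous_const))
  · rintro ⟨x, t⟩ ⟨h1, h2, h3⟩
    simp only at h1 h2 h3
    exact ⟨⟨h1, h1.trans h2⟩, ⟨h2.trans h3, h3⟩⟩

lemma convex_DeltaT (T : ℝ) : Convex ℝ (DeltaT T) := by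
  rintro ⟨x, t⟩ ⟨h1, h2, h3⟩ ⟨y, s⟩ ⟨k1, k2, k3⟩ a b ha hb hab
  simp only [DeltaT, mem_ofPred_eq, Prod.smul_mk, Prod.mk_add_mk, smul_eq_mul] at *
  refine ⟨by positivity, by nlinarith, ?_⟩
  calc a * t + b * s ≤ a * T + b * T := by gcongr
    _ = T := by rw [← add_mul, hab, one_mul]

/-- The open triangle `0 < x < t < T`. -/
def openTri (T : ℝ) : Set (ℝ × ℝ) := {z | 0 < z.1 ∧ z.1 < z.2 ∧ z.2 < T}

lemma isOpen_openTri (T : ℝ) : IsOpen (openTri T) :=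
  (isOpen_lt continuous_const continuous_fst).inter
    ((isOpen_lt continuous_fst continuous_snd).inter
      (isOpen_lt continuous_snd continuous_const))

lemma openTri_subset (T : ℝ) : openTri T ⊆ DeltaT T :=
  fun _ h => ⟨h.1.le, h.2.1.le, h.2.2.le⟩

lemma DeltaT_mem_nhds {T : ℝ} {z : ℝ × ℝ} (hz : z ∈ openTri T) : DeltaT T ∈ 𝓝 z :=
  mem_of_superset ((isOpen_openTri T).mem_nhds hz) (openTri_subset T)

lemma uniqueDiffOn_DeltaT {T : ℝ} (hT : 0 < T) : UniqueDiffOn ℝ (DeltaT T) := by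
  refine uniqueDiffOn_convex (convex_DeltaT T) ⟨(T / 3, T / 2), ?_⟩
  exact mem_interior_iff_mem_nhds.2 (DeltaT_mem_nhds ⟨by positivity, by simp; linarith,
    by simp; linarith⟩)

/-- The linear map `(x, t) ↦ (x, x + θ (t - x))`. -/
def slide (θ : ℝ) : ℝ × ℝ →L[ℝ] ℝ × ℝ :=
  (ContinuousLinearMap.fst ℝ ℝ ℝ).prod (ContinuousLinearMap.fst ℝ ℝ ℝ +
    θ • (ContinuousLinearMap.snd ℝ ℝ ℝ - ContinuousLinearMap.fst ℝ ℝ ℝ))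

lemma slide_apply (θ : ℝ) (z : ℝ × ℝ) : slide θ z = (z.1, z.1 + θ * (z.2 - z.1)) := by
  simp [slide]

lemma slide_mem {T θ : ℝ} (hθ : θ ∈ Icc (0 : ℝ) 1) {z : ℝ × ℝ} (hz : z ∈ DeltaT T) :
    slide θ z ∈ DeltaT T := by
  obtain ⟨h1, h2, h3⟩ := hz
  obtain ⟨k1, k2⟩ := hθ
  rw [slide_apply]
  exact ⟨h1, by simp only; nlinarith, by simp only; nlinarith⟩

lemma slide_mem_open {T θ : ℝ} (hθ : θ ∈ Ioc (0 : ℝ) 1) {z : ℝ × ℝ} (hz : z ∈ openTri T) :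
    slide θ z ∈ openTri T := by
  obtain ⟨h1, h2, h3⟩ := hz
  obtain ⟨k1, k2⟩ := hθ
  rw [slide_apply]
  exact ⟨h1, by simp only; nlinarith, by simp only; nlinarith⟩

lemma continuous_slide_left (z : ℝ × ℝ) : Continuous fun θ => slide θ z := by
  simp only [slide_apply]; fun_prop

lemma continuous_slide : Continuous slide := by
  have : slide = fun θ => (ContinuousLinearMap.inl ℝ ℝ ℝ).comp (ContinuousLinearMap.fst ℝ ℝ ℝ) +
      ((ContinuousLinearMap.inr ℝ ℝ ℝ).comp (ContinuousLinearMap.fst ℝ ℝ ℝ) +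
      θ • (ContinuousLinearMap.inr ℝ ℝ ℝ).comp
        (ContinuousLinearMap.snd ℝ ℝ ℝ - ContinuousLinearMap.fst ℝ ℝ ℝ)) := by
    ext θ <;> simp [slide]
  rw [this]
  fun_prop

/-! ### The averaged kernel -/

/-- The weighted average `K(x, t) = ∫₀¹ (1 - θ)² w(x, x + θ (t - x)) dθ` of `w` over the vertical
segment from `(x, x)` to `(x, t)`. -/
def avg (w : ℝ × ℝ → Fin 2 → ℂ) (z : ℝ × ℝ) : Fin 2 → ℂ :=
  ∫ θ in (0 : ℝ)..1, ((1 - θ) ^ 2 : ℝ) • w (slide θ z)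

lemma continuousOn_integrand {w : ℝ × ℝ → Fin 2 → ℂ} {T : ℝ} (hw : ContinuousOn w (DeltaT T))
    {z : ℝ × ℝ} (hz : z ∈ DeltaT T) :
    ContinuousOn (fun θ : ℝ => ((1 - θ) ^ 2 : ℝ) • w (slide θ z)) (Icc 0 1) := by
  refine ContinuousOn.smul (f := fun θ : ℝ => ((1 - θ) ^ 2 : ℝ)) (by fun_prop) ?_
  exact hw.comp (continuous_slide_left z).continuousOn fun θ hθ => slide_mem hθ hz

lemma aesm_integrand {w : ℝ × ℝ → Fin 2 → ℂ} {T : ℝ} (hw : ContinuousOn w (DeltaT T))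
    {z : ℝ × ℝ} (hz : z ∈ DeltaT T) :
    AEStronglyMeasurable (fun θ : ℝ => ((1 - θ) ^ 2 : ℝ) • w (slide θ z))
      (volume.restrict (uIoc 0 1)) := by
  rw [uIoc_of_le zero_le_one]
  exact ((continuousOn_integrand hw hz).mono Ioc_subset_Icc_self).aestronglyMeasurable
    measurableSet_Ioc

lemma sq_one_sub_le {θ : ℝ} (hθ : θ ∈ Icc (0 : ℝ) 1) : ‖((1 - θ) ^ 2 : ℝ)‖ ≤ 1 := by
  obtain ⟨k1, k2⟩ := hθ
  rw [Real.norm_of_nonneg (by positivity)]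
  nlinarith

lemma continuousOn_avg {w : ℝ × ℝ → Fin 2 → ℂ} {T : ℝ} (hw : ContinuousOn w (DeltaT T)) :
    ContinuousOn (avg w) (DeltaT T) := by
  obtain ⟨M, hM⟩ := (isCompact_DeltaT T).exists_bound_of_continuousOn hw
  intro z hz
  refine intervalIntegral.continuousWithinAt_of_dominated_interval (bound := fun _ => M) ?_ ?_
    intervalIntegrable_const ?_
  · filter_upwards [self_mem_nhdsWithin] with y hy using aesm_integrand hw hy
  · filter_upwards [self_mem_nhdsWithin] with y hy
    refine Eventually.of_forall fun θ hθ => ?_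
    rw [uIoc_of_le zero_le_one] at hθ
    have hθ' := Ioc_subset_Icc_self hθ
    rw [norm_smul]
    calc _ ≤ 1 * ‖w (slide θ y)‖ := by gcongr; exact sq_one_sub_le hθ'
      _ ≤ M := by rw [one_mul]; exact hM _ (slide_mem hθ' hy)
  · refine Eventually.of_forall fun θ hθ => ?_
    rw [uIoc_of_le zero_le_one] at hθ
    have hθ' := Ioc_subset_Icc_self hθ
    have h : ContinuousWithinAt (fun y => w (slide θ y)) (DeltaT T) z :=
      (hw.comp (slide θ).continuous.continuousOn fun y hy => slide_mem hθ' hy) z hz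
    exact h.const_smul ((1 - θ) ^ 2 : ℝ)

lemma avg_diag (w : ℝ × ℝ → Fin 2 → ℂ) (c : ℝ) : avg w (c, c) = (1 / 3 : ℝ) • w (c, c) := by
  have h : ∫ θ in (0 : ℝ)..1, ((1 - θ) ^ 2 : ℝ) = 1 / 3 := by
    rw [intervalIntegral.integral_comp_sub_left (fun x : ℝ => x ^ 2) 1]
    norm_num
  simp only [avg, slide_apply, sub_self, mul_zero, add_zero]
  rw [intervalIntegral.integral_smul_const, h]

/-- Differentiation under the integral sign, dominated since `Dw` is bounded on the compact triangle. -/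
lemma differentiableAt_avg {w : ℝ × ℝ → Fin 2 → ℂ} {T : ℝ} (hT : 0 < T)
    (hw : ContDiffOn ℝ 1 w (DeltaT T)) {z : ℝ × ℝ} (hz : z ∈ openTri T) :
    DifferentiableAt ℝ (avg w) z := by
  have hD := hw.continuousOn_fderivWithin (uniqueDiffOn_DeltaT hT) le_rfl
  obtain ⟨C, hC⟩ := (isCompact_DeltaT T).exists_bound_of_continuousOn hD
  obtain ⟨S, hS⟩ := (isCompact_Icc (a := (0 : ℝ)) (b := 1)).exists_bound_of_continuousOn
    continuous_slide.continuousOn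
  have hzD := openTri_subset T hz
  refine (intervalIntegral.hasFDerivAt_integral_of_dominated_of_fderiv_le (𝕜 := ℝ)
    (F := fun z θ => ((1 - θ) ^ 2 : ℝ) • w (slide θ z))
    (F' := fun z θ => ((1 - θ) ^ 2 : ℝ) • (fderivWithin ℝ w (DeltaT T) (slide θ z)).comp (slide θ))
    (bound := fun _ => C * S)
    ((isOpen_openTri T).mem_nhds hz) ?_ ?_ ?_ ?_ intervalIntegrable_const ?_).differentiableAt
  · filter_upwards [DeltaT_mem_nhds hz] with y hy using aesm_integrand hw.continuousOn hy
  · refine ContinuousOn.intervalIntegrable ?_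
    rw [uIcc_of_le zero_le_one]
    exact continuousOn_integrand hw.continuousOn hzD
  · rw [uIoc_of_le zero_le_one]
    refine (ContinuousOn.mono ?_ Ioc_subset_Icc_self).aestronglyMeasurable measurableSet_Ioc
    refine ContinuousOn.smul (f := fun θ : ℝ => ((1 - θ) ^ 2 : ℝ)) (by fun_prop)
      (ContinuousOn.clm_comp ?_ continuous_slide.continuousOn)
    exact hD.comp (continuous_slide_left z).continuousOn fun θ hθ => slide_mem hθ hzD
  · refine Eventually.of_forall fun θ hθ y hy => ?_
    rw [uIoc_of_le zero_le_one] at hθ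
    have hθ' := Ioc_subset_Icc_self hθ
    have h1 := hC _ (slide_mem hθ' (openTri_subset T hy))
    rw [norm_smul]
    calc _ ≤ 1 * (‖fderivWithin ℝ w (DeltaT T) (slide θ y)‖ * ‖slide θ‖) := by
          gcongr
          · exact sq_one_sub_le hθ'
          · exact ContinuousLinearMap.opNorm_comp_le _ _
      _ ≤ C * S := by
          rw [one_mul]
          exact mul_le_mul h1 (hS θ hθ') (norm_nonneg _) ((norm_nonneg _).trans h1)
  · refine Eventually.of_forall fun θ hθ y hy => ?_
    rw [uIoc_of_le zero_le_one] at hθ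
    -- `θ > 0` keeps `slide θ y` off the diagonal, where `w` need not have a full derivative.
    have hm := slide_mem_open hθ hy
    have hd : HasFDerivAt w (fderivWithin ℝ w (DeltaT T) (slide θ y)) (slide θ y) :=
      ((hw.differentiableOn one_ne_zero _ (openTri_subset T hm)).hasFDerivWithinAt).hasFDerivAt
        (DeltaT_mem_nhds hm)
    exact (hd.comp y (slide θ).hasFDerivAt).const_smul ((1 - θ) ^ 2 : ℝ)

/-! ### The quadratic input -/

/-- The test input `t ↦ t²` for `t ≥ 0`, extended by zero. -/
def sqf (t : ℝ) : ℂ := if t < 0 then 0 else (t : ℂ) ^ 2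

lemma sqf_of_nonneg {t : ℝ} (h : 0 ≤ t) : sqf t = (t : ℂ) ^ 2 := if_neg h.not_gt

lemma contDiff_sq : ContDiff ℝ 1 fun t : ℝ => (t : ℂ) ^ 2 :=
  Complex.ofRealCLM.contDiff.pow 2

lemma contDiffOn_sqf (T : ℝ) : ContDiffOn ℝ 1 sqf (Icc 0 T) :=
  contDiff_sq.contDiffOn.congr fun _ ht => sqf_of_nonneg ht.1

lemma derivWithin_sqf {T : ℝ} (hT : 0 < T) : derivWithin sqf (Icc 0 T) 0 = 0 := by
  have h0 : (0 : ℝ) ∈ Icc 0 T := ⟨le_rfl, hT.le⟩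
  rw [derivWithin_congr (f := fun t : ℝ => (t : ℂ) ^ 2) (fun t ht => sqf_of_nonneg ht.1)
    (sqf_of_nonneg le_rfl)]
  refine HasDerivWithinAt.derivWithin ?_ (uniqueDiffOn_Icc hT 0 h0)
  have h := ((Complex.ofRealCLM.hasDerivAt (x := (0 : ℝ))).fun_pow 2).hasDerivWithinAt (s := Icc 0 T)
  simpa using h

/-- For the quadratic input the representation becomes `(t - x)² (1, i)ᵀ + (t - x)³ K(x, t)`. -/
lemma usol_sqf {w : ℝ × ℝ → Fin 2 → ℂ} {z : ℝ × ℝ} (hz : z.1 ≤ z.2) :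
    usol sqf w z = ((z.2 - z.1) ^ 2 : ℝ) • ![1, Complex.I] + ((z.2 - z.1) ^ 3 : ℝ) • avg w z := by
  have h0 : 0 ≤ z.2 - z.1 := sub_nonneg.2 hz
  unfold usol
  congr 1
  · rw [sqf_of_nonneg h0]
    ext i
    simp
  · have h := intervalIntegral.smul_integral_comp_add_mul (a := 0) (b := 1)
      (fun s => sqf (z.2 - s) • w (z.1, s)) (z.2 - z.1) z.1
    simp only [mul_zero, add_zero, mul_one, add_sub_cancel] at h
    rw [← h, avg, pow_succ', mul_smul]
    congr 1
    rw [← intervalIntegral.integral_smul]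
    refine intervalIntegral.integral_congr fun θ hθ => ?_
    rw [uIcc_of_le zero_le_one] at hθ
    have e : z.2 - (z.1 + (z.2 - z.1) * θ) = (z.2 - z.1) * (1 - θ) := by ring
    simp only [e, slide_apply]
    rw [sqf_of_nonneg (mul_nonneg h0 (sub_nonneg.2 hθ.2)), mul_comm θ, smul_smul, ← mul_pow]
    ext i
    simp

lemma differentiableAt_usol {w : ℝ × ℝ → Fin 2 → ℂ} {T : ℝ} (hT : 0 < T)
    (hw : ContDiffOn ℝ 1 w (DeltaT T)) {z : ℝ × ℝ} (hz : z ∈ openTri T) :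
    DifferentiableAt ℝ (usol sqf w) z := by
  have h := differentiableAt_avg hT hw hz
  have : DifferentiableAt ℝ (fun z : ℝ × ℝ => ((z.2 - z.1) ^ 2 : ℝ) • (![1, Complex.I] : Fin 2 → ℂ)
      + ((z.2 - z.1) ^ 3 : ℝ) • avg w z) z := by
    fun_prop
  refine this.congr_of_eventuallyEq ?_
  filter_upwards [DeltaT_mem_nhds hz] with y hy using usol_sqf hy.2.1

/-! ### The limit at the diagonal -/

/-- L'Hôpital's rule for complex-valued `g` compared with `τ³` as `τ → 0⁺`. -/
lemma lhopital_cube {g g' : ℝ → ℂ} {l : ℂ} (hg : ∀ᶠ τ in 𝓝[>] (0 : ℝ), HasDerivAt g (g' τ) τ)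
    (h0 : Tendsto g (𝓝[>] 0) (𝓝 0))
    (hl : Tendsto (fun τ : ℝ => g' τ / (τ : ℂ) ^ 2) (𝓝[>] 0) (𝓝 l)) :
    Tendsto (fun τ : ℝ => g τ / (τ : ℂ) ^ 3) (𝓝[>] 0) (𝓝 (l / 3)) := by
  -- Mathlib's rule is for real functions: apply it to the real and imaginary parts.
  have key : ∀ L : ℂ →L[ℝ] ℝ,
      Tendsto (fun τ : ℝ => L (g τ / (τ : ℂ) ^ 3)) (𝓝[>] 0) (𝓝 (L (l / 3))) := by
    intro L
    have hs : ∀ (z : ℂ) (r : ℝ), L (z / (r : ℂ)) = L z / r := by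
      intro z r
      have : z / (r : ℂ) = r⁻¹ • z := by
        rw [Complex.real_smul, Complex.ofReal_inv, div_eq_inv_mul]
      rw [this, L.map_smul, smul_eq_mul, div_eq_inv_mul]
    have hL : Tendsto (fun τ : ℝ => L (g τ) / τ ^ 3) (𝓝[>] 0) (𝓝 (L (l / 3))) := by
      refine HasDerivAt.lhopital_zero_nhdsGT (f' := fun τ => L (g' τ))
        (g' := fun τ : ℝ => 3 * τ ^ 2) ?_ ?_ ?_ ?_ ?_ ?_
      · filter_upwards [hg] with τ hτ using L.hasFDerivAt.comp_hasDerivAt τ hτ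
      · exact Eventually.of_forall fun τ => by simpa using hasDerivAt_pow 3 τ
      · filter_upwards [self_mem_nhdsWithin] with τ hτ
        have : (0 : ℝ) < τ := hτ
        positivity
      · simpa [Function.comp_def] using (L.continuous.tendsto 0).comp h0
      · have : Tendsto (fun τ : ℝ => τ ^ 3) (𝓝 0) (𝓝 (0 ^ 3)) := (continuous_pow 3).tendsto 0
        simpa using this.mono_left nhdsWithin_le_nhds
      · have h1 : Tendsto (fun τ : ℝ => L (g' τ / (τ : ℂ) ^ 2) / 3) (𝓝[>] 0) (𝓝 (L l / 3)) :=
          ((L.continuous.tendsto l).comp hl).div_const 3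
        have h2 := hs l 3
        push_cast at h2
        rw [h2]
        refine h1.congr fun τ => ?_
        have h3 := hs (g' τ) (τ ^ 2)
        push_cast at h3
        rw [h3, div_div, mul_comm]
    refine hL.congr fun τ => ?_
    have h3 := hs (g τ) (τ ^ 3)
    push_cast at h3
    rw [h3]
  have hre := key Complex.reCLM
  have him := key Complex.imCLM
  have := (Complex.continuous_ofReal.tendsto _).comp hre |>.add
    (((Complex.continuous_ofReal.tendsto _).comp him).mul_const Complex.I)
  simpa only [Function.comp_def, Complex.reCLM_apply, Complex.imCLM_apply, Complex.re_add_im]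
    using this

/-- The row combination `row₁ + i row₂` of the Dirac equation, in which the derivatives enter only
through `∂ₜ - ∂ₓ` of `u₁ + i u₂`. Here `a`, `b` and `v` stand for `∂ₜ u`, `∂ₓ u` and `u`. -/
lemma dirac_combination {p q : ℝ → ℝ} {x : ℝ} {a b v : Fin 2 → ℂ}
    (h : Complex.I • a + Jmat.mulVec b + (Vmat p q x).mulVec v = 0) :
    (a 0 - b 0) + Complex.I * (a 1 - b 1) =
      Complex.I * ((p x : ℂ) + Complex.I * q x) * (v 0 - Complex.I * v 1) := by
  have h0 := congrFun h 0
  have h1 := congrFun h 1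
  simp only [Jmat, Vmat, Matrix.mulVec, dotProduct, Fin.sum_univ_two, Pi.add_apply, Pi.smul_apply,
    Matrix.of_apply, Matrix.cons_val_zero, Matrix.cons_val_one, smul_eq_mul, Pi.zero_apply] at h0 h1
  have hI := Complex.I_mul_I
  linear_combination (-Complex.I) * h0 + h1 +
    (a 0 + p x * v 1 - q x * v 0 + Complex.I * q x * v 1) * hI

/-- The identity at interior points of the diagonal, from the Dirac equation for the quadratic input
alone: compare `φ / τ³` and `φ' / τ²` as `τ → 0⁺` along `(c - τ, c + τ)`. -/
lemma diag_interior {T : ℝ} (hT : 0 < T) {p q : ℝ → ℝ}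
    (hp : ContinuousOn p (Icc 0 T)) (hq : ContinuousOn q (Icc 0 T))
    {w : ℝ × ℝ → Fin 2 → ℂ} (hw : ContDiffOn ℝ 1 w (DeltaT T))
    (hsol : DiracOn p q (DeltaT T) (usol sqf w)) {c : ℝ} (hc : c ∈ Ioo 0 T) :
    -Complex.I * w (c, c) 0 + w (c, c) 1 = (p c : ℂ) + Complex.I * (q c : ℂ) := by
  obtain ⟨hc0, hcT⟩ := hc
  set γ : ℝ → ℝ × ℝ := fun τ => (c - τ, c + τ) with hγ
  have hγc : Continuous γ := by fun_prop
  have hγ0 : γ 0 = (c, c) := by simp [hγ]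
  have hγd : ∀ τ, HasDerivAt γ (-1, 1) τ := fun τ => by
    have h1 : HasDerivAt (fun τ : ℝ => c - τ) (-1) τ := by
      simpa using (hasDerivAt_id τ).const_sub c
    have h2 : HasDerivAt (fun τ : ℝ => c + τ) 1 τ := by
      simpa using (hasDerivAt_id τ).const_add c
    exact h1.prodMk h2
  have hmem : ∀ᶠ τ in 𝓝[>] (0 : ℝ), γ τ ∈ openTri T := by
    have hlt : Ioo 0 (min c (T - c)) ∈ 𝓝[>] (0 : ℝ) :=
      Ioo_mem_nhdsGT (lt_min hc0 (sub_pos.2 hcT))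
    filter_upwards [hlt] with τ hτ
    have h1 := hτ.2.trans_le (min_le_left _ _)
    have h2 := hτ.2.trans_le (min_le_right _ _)
    have h3 := hτ.1
    exact ⟨by simp only [hγ]; linarith, by simp only [hγ]; linarith, by simp only [hγ]; linarith⟩
  have hcc : (c, c) ∈ DeltaT T := ⟨hc0.le, le_rfl, hcT.le⟩
  have hγt : Tendsto γ (𝓝[>] 0) (𝓝[DeltaT T] (c, c)) := by
    refine tendsto_nhdsWithin_iff.2 ⟨?_, hmem.mono fun τ h => openTri_subset T h⟩
    rw [← hγ0]
    exact (hγc.tendsto 0).mono_left nhdsWithin_le_nhds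
  have hK : Tendsto (fun τ => avg w (γ τ)) (𝓝[>] 0) (𝓝 ((1 / 3 : ℝ) • w (c, c))) := by
    rw [← avg_diag]
    exact (continuousOn_avg hw.continuousOn _ hcc).tendsto.comp hγt
  have hK0 := tendsto_pi_nhds.1 hK 0
  have hK1 := tendsto_pi_nhds.1 hK 1
  have hx : Tendsto (fun τ : ℝ => c - τ) (𝓝[>] 0) (𝓝 c) := by
    have : Tendsto (fun τ : ℝ => c - τ) (𝓝 0) (𝓝 (c - 0)) :=
      (continuous_const.sub continuous_id).tendsto 0
    simpa using this.mono_left nhdsWithin_le_nhds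
  have hτ0 : Tendsto (fun τ : ℝ => (τ : ℂ)) (𝓝[>] 0) (𝓝 0) := by
    have := Complex.continuous_ofReal.tendsto 0
    rw [Complex.ofReal_zero] at this
    exact this.mono_left nhdsWithin_le_nhds
  have hpt : Tendsto (fun τ : ℝ => (p (c - τ) : ℂ)) (𝓝[>] 0) (𝓝 (p c)) :=
    (Complex.continuous_ofReal.tendsto _).comp
      ((hp.continuousAt (Icc_mem_nhds hc0 hcT)).tendsto.comp hx)
  have hqt : Tendsto (fun τ : ℝ => (q (c - τ) : ℂ)) (𝓝[>] 0) (𝓝 (q c)) :=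
    (Complex.continuous_ofReal.tendsto _).comp
      ((hq.continuousAt (Icc_mem_nhds hc0 hcT)).tendsto.comp hx)
  -- `u` along the curve, where `t - x = 2 τ`
  have hu : ∀ᶠ τ in 𝓝[>] (0 : ℝ), ∀ i, usol sqf w (γ τ) i =
      4 * (τ : ℂ) ^ 2 * (![1, Complex.I] : Fin 2 → ℂ) i + 8 * (τ : ℂ) ^ 3 * avg w (γ τ) i := by
    filter_upwards [hmem] with τ hτ i
    rw [usol_sqf hτ.2.1.le]
    have e : (γ τ).2 - (γ τ).1 = 2 * τ := by simp only [hγ]; ring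
    rw [e]
    simp only [Pi.add_apply, Pi.smul_apply, Complex.real_smul]
    push_cast
    ring
  set φ : ℝ → ℂ := fun τ => usol sqf w (γ τ) 0 + Complex.I * usol sqf w (γ τ) 1 with hφ
  have hφe : ∀ᶠ τ in 𝓝[>] (0 : ℝ), φ τ =
      8 * (τ : ℂ) ^ 3 * (avg w (γ τ) 0 + Complex.I * avg w (γ τ) 1) := by
    filter_upwards [hu] with τ h
    simp only [hφ, h]
    simp only [Matrix.cons_val_zero, Matrix.cons_val_one]
    linear_combination (4 * (τ : ℂ) ^ 2) * Complex.I_mul_I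
  have hKφ : Tendsto (fun τ => 8 * (avg w (γ τ) 0 + Complex.I * avg w (γ τ) 1)) (𝓝[>] 0)
      (𝓝 (8 * (((1 / 3 : ℝ) • w (c, c)) 0 + Complex.I * ((1 / 3 : ℝ) • w (c, c)) 1))) :=
    (hK0.add (hK1.const_mul _)).const_mul _
  have hφ0 : Tendsto φ (𝓝[>] 0) (𝓝 0) := by
    have := (hτ0.pow 3).mul hKφ
    rw [zero_pow three_ne_zero, zero_mul] at this
    refine this.congr' ?_
    filter_upwards [hφe] with τ h
    rw [h]; ring
  have hdφ : ∀ᶠ τ in 𝓝[>] (0 : ℝ), HasDerivAt φ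
      (Complex.I * ((p (c - τ) : ℂ) + Complex.I * q (c - τ)) *
        (usol sqf w (γ τ) 0 - Complex.I * usol sqf w (γ τ) 1)) τ := by
    filter_upwards [hmem] with τ hτ
    have hd := (differentiableAt_usol hT hw hτ).hasFDerivAt
    have hD := hsol _ (openTri_subset T hτ)
    rw [fderivWithin_of_mem_nhds (DeltaT_mem_nhds hτ)] at hD
    rw [← dirac_combination hD]
    have hcomp := hasDerivAt_pi.1 (hd.comp_hasDerivAt τ (hγd τ))
    have e : ((-1 : ℝ), (1 : ℝ)) = (0, 1) - (1, 0) := by simp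
    rw [e, map_sub] at hcomp
    exact (hcomp 0).add ((hcomp 1).const_mul Complex.I)
  have hlim : Tendsto (fun τ : ℝ => (Complex.I * ((p (c - τ) : ℂ) + Complex.I * q (c - τ)) *
        (usol sqf w (γ τ) 0 - Complex.I * usol sqf w (γ τ) 1)) / (τ : ℂ) ^ 2) (𝓝[>] 0)
      (𝓝 (Complex.I * ((p c : ℂ) + Complex.I * q c) * 8)) := by
    have h1 : Tendsto (fun τ : ℝ => Complex.I * ((p (c - τ) : ℂ) + Complex.I * q (c - τ)) *
        (8 + (τ : ℂ) * (8 * (avg w (γ τ) 0 - Complex.I * avg w (γ τ) 1)))) (𝓝[>] 0)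
        (𝓝 (Complex.I * ((p c : ℂ) + Complex.I * q c) * (8 + 0 * (8 *
          (((1 / 3 : ℝ) • w (c, c)) 0 - Complex.I * ((1 / 3 : ℝ) • w (c, c)) 1))))) :=
      ((hpt.add (hqt.const_mul _)).const_mul _).mul
        ((hτ0.mul ((hK0.sub (hK1.const_mul _)).const_mul _)).const_add _)
    rw [zero_mul, add_zero] at h1
    refine h1.congr' ?_
    filter_upwards [hu, self_mem_nhdsWithin] with τ h hτ
    have hτ' : (τ : ℂ) ≠ 0 := Complex.ofReal_ne_zero.2 (ne_of_gt hτ)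
    rw [eq_div_iff (pow_ne_zero 2 hτ'), h, h]
    simp only [Matrix.cons_val_zero, Matrix.cons_val_one]
    linear_combination (Complex.I * ((p (c - τ) : ℂ) + Complex.I * q (c - τ)) *
      (4 * (τ : ℂ) ^ 2)) * Complex.I_mul_I
  have hfin := lhopital_cube hdφ hφ0 hlim
  have hfin' : Tendsto (fun τ : ℝ => φ τ / (τ : ℂ) ^ 3) (𝓝[>] 0)
      (𝓝 (8 * (((1 / 3 : ℝ) • w (c, c)) 0 + Complex.I * ((1 / 3 : ℝ) • w (c, c)) 1))) := by
    refine hKφ.congr' ?_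
    filter_upwards [hφe, self_mem_nhdsWithin] with τ h hτ
    have hτ' : (τ : ℂ) ≠ 0 := Complex.ofReal_ne_zero.2 (ne_of_gt hτ)
    rw [eq_div_iff (pow_ne_zero 3 hτ'), h]
    ring
  have heq := tendsto_nhds_unique hfin' hfin
  simp only [Pi.smul_apply, Complex.real_smul] at heq
  push_cast at heq
  linear_combination (-Complex.I * 3 / 8) * heq +
    (w (c, c) 1 - p c - Complex.I * q c) * Complex.I_mul_I

/-- The diagonal values of the kernel `w` of the fundamental solution
determine the potential: `-i w₁(x,x) + w₂(x,x) = p(x) + i q(x)`. -/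
theorem stmt2 (T : ℝ) (hT : 0 < T) (p q : ℝ → ℝ)
    (hp : ContDiffOn ℝ 1 p (Icc 0 T)) (hq : ContDiffOn ℝ 1 q (Icc 0 T))
    (w : ℝ × ℝ → Fin 2 → ℂ) (hw : ContDiffOn ℝ 1 w (DeltaT T))
    (hsol : ∀ f : ℝ → ℂ, (∀ t < (0 : ℝ), f t = 0) →
      ContDiffOn ℝ 1 f (Icc 0 T) → f 0 = 0 → derivWithin f (Icc 0 T) 0 = 0 →
      DiracOn p q (DeltaT T) (usol f w)) :
    ∀ x ∈ Icc (0 : ℝ) T,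
      -Complex.I * w (x, x) 0 + w (x, x) 1 = (p x : ℂ) + Complex.I * (q x : ℂ) := by
  have hS := hsol sqf (fun t ht => if_pos ht) (contDiffOn_sqf T) (by simp [sqf])
    (derivWithin_sqf hT)
  have hdiag : ContinuousOn (fun x : ℝ => w (x, x)) (Icc 0 T) :=
    hw.continuousOn.comp (by fun_prop) fun x hx => ⟨hx.1, le_rfl, hx.2⟩
  have hw0 : ContinuousOn (fun x : ℝ => w (x, x) 0) (Icc 0 T) := continuousOn_pi.1 hdiag 0
  have hw1 : ContinuousOn (fun x : ℝ => w (x, x) 1) (Icc 0 T) := continuousOn_pi.1 hdiag 1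
  have hpc : ContinuousOn (fun x : ℝ => (p x : ℂ)) (Icc 0 T) :=
    Complex.continuous_ofReal.comp_continuousOn hp.continuousOn
  have hqc : ContinuousOn (fun x : ℝ => (q x : ℂ)) (Icc 0 T) :=
    Complex.continuous_ofReal.comp_continuousOn hq.continuousOn
  have heq : EqOn (fun x : ℝ => -Complex.I * w (x, x) 0 + w (x, x) 1)
      (fun x : ℝ => (p x : ℂ) + Complex.I * (q x : ℂ)) (Ioo 0 T) :=
    fun c hc => diag_interior hT hp.continuousOn hq.continuousOn hw hS hc
  exact heq.of_subset_closure ((continuousOn_const.mul hw0).add hw1)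
    (hpc.add (continuousOn_const.mul hqc)) Ioo_subset_Icc_self (closure_Ioo hT.ne).ge
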